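/- Let p ∈ (0,1/2], r ∈ ℕ with r ≥ 1, and δ > 0. Suppose f : {0,1}^n → {0,1} is an (r,δ)-global Boolean function with μ_p(f) < δ. Then 𝔼_{μ_p}[(f^{≤r})²] ≤ 10^r·δ^{1/3}·μ_p(f). -/

import Mathlib

open Finset

namespace GlobalHC

variable {n : ℕ}

/-- Expectation with respect to the `p`-biased measure on `{0,1}^n`. -/
noncomputable def Ep (p : ℝ) (f : (Fin n → Bool) → ℝ) : ℝ :=
  ∑ x : Fin n → Bool, (∏ i, if x i then p else 1 - p) * f x

/-- The `r`-norm with respect to the `p`-biased measure. -/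
noncomputable def pnorm (p r : ℝ) (f : (Fin n → Bool) → ℝ) : ℝ :=
  (Ep p fun x => |f x| ^ r) ^ (1 / r)

/-- The `p`-biased character `χ_S`. -/
noncomputable def chi (p : ℝ) (S : Finset (Fin n)) (x : Fin n → Bool) : ℝ :=
  ∏ i ∈ S, ((if x i then (1 : ℝ) else 0) - p) / Real.sqrt (p * (1 - p))

/-- The `p`-biased Fourier coefficient `f̂(S)`. -/
noncomputable def coeff (p : ℝ) (f : (Fin n → Bool) → ℝ) (S : Finset (Fin n)) : ℝ :=
  Ep p fun x => f x * chi p S x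

/-- The derivative `D_S f = Σ_{T ⊇ S} f̂(T) χ_{T∖S}`. -/
noncomputable def derivS (p : ℝ) (S : Finset (Fin n)) (f : (Fin n → Bool) → ℝ) :
    (Fin n → Bool) → ℝ :=
  fun x => ∑ T ∈ Finset.univ.filter (fun T => S ⊆ T), coeff p f T * chi p (T \ S) x

/-- The generalised influence `I_S(f) = σ^{-2|S|} Σ_{T ⊇ S} f̂(T)²`. -/
noncomputable def genInf (p : ℝ) (S : Finset (Fin n)) (f : (Fin n → Bool) → ℝ) : ℝ :=
  (∑ T ∈ Finset.univ.filter (fun T => S ⊆ T), coeff p f T ^ 2) / (p * (1 - p)) ^ S.card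

/-- The noise operator `T_ρ f = Σ_S ρ^{|S|} f̂(S) χ_S`. -/
noncomputable def noise (p ρ : ℝ) (f : (Fin n → Bool) → ℝ) : (Fin n → Bool) → ℝ :=
  fun x => ∑ S : Finset (Fin n), ρ ^ S.card * coeff p f S * chi p S x

/-- The degree-`r` truncation `f^{≤ r}`. -/
noncomputable def trunc (p : ℝ) (r : ℕ) (f : (Fin n → Bool) → ℝ) : (Fin n → Bool) → ℝ :=
  fun x => ∑ S ∈ Finset.univ.filter (fun S : Finset (Fin n) => S.card ≤ r),
    coeff p f S * chi p S x

/-- The restriction `f_{J→1}` setting all coordinates in `J` to `1`. -/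
def restrict1 (J : Finset (Fin n)) (f : (Fin n → Bool) → ℝ) : (Fin n → Bool) → ℝ :=
  fun x => f (fun i => if i ∈ J then true else x i)

/-- `f` is `(r,δ)`-global (for the `p`-biased measure). -/
def IsGlobal (p r δ : ℝ) (f : (Fin n → Bool) → ℝ) : Prop :=
  ∀ J : Finset (Fin n), (J.card : ℝ) ≤ r → Ep p (restrict1 J f) ≤ Ep p f + δ

/-- The total influence `I[f] = Σ_i Pr_{μ_p}[f(x ⊕ e_i) ≠ f(x)]`. -/
noncomputable def totalInf (p : ℝ) (f : (Fin n → Bool) → ℝ) : ℝ :=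
  ∑ i : Fin n, Ep p fun x => if f (Function.update x i (!x i)) = f x then 0 else 1

/-- Noise stability `Stab_ρ(f) = Σ_S ρ^{|S|} f̂(S)²` (w.r.t. `μ_p`). -/
noncomputable def stab (p ρ : ℝ) (f : (Fin n → Bool) → ℝ) : ℝ :=
  ∑ S : Finset (Fin n), ρ ^ S.card * coeff p f S ^ 2

/-- `f` is monotone. -/
def Mono (f : (Fin n → Bool) → ℝ) : Prop :=
  ∀ x y : Fin n → Bool, (∀ i, x i ≤ y i) → f x ≤ f y

/-! Write `μ` for the expectation of `f`, `σ² = p (1 - p)` and `I_S` for the generalised influences.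
Split off the first coordinate, `f = headAvg f + χ_{0} * headDeriv f`, and induct on `n`: a
two-point inequality then tensorises to
`E[(T_{1/2} f)² (T_{1/2} g)²] ≤ ∑_S (3 σ² / 16)^|S| I_S(f) I_S(g)`.
By the same induction `I_S(f)` is at most `(8 / 3)^|S|` times the sum over `J ⊆ S` of the second
moments of `f_{J → 1}`, so for global `f` it is at most `(16 / 3)^|S| (μ + δ)` whenever `|S| ≤ r`.
Applying the first bound to `T_2 f^{≤r}`, whose influences exceed those of `f^{≤r}` by a factor of
at most `4^r`, gives `E[(f^{≤r})⁴] ≤ 32^r (μ + δ) W` with `W = E[(f^{≤r})²] = E[f f^{≤r}]`. Hölder's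
inequality `W⁴ ≤ μ³ E[f (f^{≤r})⁴]` turns this into `W³ ≤ 32^r (μ + δ) μ³`, and `μ ≤ δ`. -/

section FinsetFinSucc

/-- The image of `T ⊆ [n]` under `i ↦ i + 1`: a set of coordinates of `{0,1}^(n+1)` that avoids
the first one. -/
def shift (T : Finset (Fin n)) : Finset (Fin (n + 1)) := T.map (Fin.succEmb n)

/-- The set `shift T` together with the first coordinate. Every subset of `Fin (n + 1)` is
`shift T` or `insertShift T` for exactly one `T`. -/
def insertShift (T : Finset (Fin n)) : Finset (Fin (n + 1)) := insert 0 (shift T)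

lemma zero_notMem_shift (T : Finset (Fin n)) : 0 ∉ shift T := by
  simp [shift, Fin.succ_ne_zero]

lemma zero_mem_insertShift (T : Finset (Fin n)) : 0 ∈ insertShift T :=
  mem_insert_self _ _

lemma succ_mem_shift {T : Finset (Fin n)} {i : Fin n} : i.succ ∈ shift T ↔ i ∈ T := by
  simp [shift]

lemma succ_mem_insertShift {T : Finset (Fin n)} {i : Fin n} : i.succ ∈ insertShift T ↔ i ∈ T := by
  simp [insertShift, succ_mem_shift, Fin.succ_ne_zero]

lemma card_shift (T : Finset (Fin n)) : (shift T).card = T.card :=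
  card_map _

lemma card_insertShift (T : Finset (Fin n)) : (insertShift T).card = T.card + 1 := by
  rw [insertShift, card_insert_of_notMem (zero_notMem_shift T), card_shift]

lemma shift_subset_shift {S T : Finset (Fin n)} : shift S ⊆ shift T ↔ S ⊆ T :=
  map_subset_map

lemma shift_subset_insertShift {S T : Finset (Fin n)} : shift S ⊆ insertShift T ↔ S ⊆ T := by
  rw [insertShift, subset_insert_iff_of_notMem (zero_notMem_shift S), shift_subset_shift]

lemma insertShift_subset_insertShift {S T : Finset (Fin n)} :
    insertShift S ⊆ insertShift T ↔ S ⊆ T := by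
  rw [insertShift, insert_subset_iff, shift_subset_insertShift,
    and_iff_right (zero_mem_insertShift T)]

lemma not_insertShift_subset_shift (S T : Finset (Fin n)) : ¬insertShift S ⊆ shift T :=
  fun h ↦ zero_notMem_shift T (h (zero_mem_insertShift S))

lemma exists_eq_shift_or_eq_insertShift (S : Finset (Fin (n + 1))) :
    ∃ T, S = shift T ∨ S = insertShift T := by
  refine ⟨univ.filter fun i ↦ i.succ ∈ S, ?_⟩
  by_cases h : 0 ∈ S
  · right
    ext i
    cases i using Fin.cases <;> simp [h, zero_mem_insertShift, succ_mem_insertShift]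
  · left
    ext i
    cases i using Fin.cases <;> simp [h, zero_notMem_shift, succ_mem_shift]

lemma powerset_shift (S : Finset (Fin n)) :
    (shift S).powerset = S.powerset.map (mapEmbedding (Fin.succEmb n)).toEmbedding := by
  ext T
  simp [shift, subset_map_iff, eq_comm]

lemma sum_powerset_shift (S : Finset (Fin n)) (F : Finset (Fin (n + 1)) → ℝ) :
    ∑ T ∈ (shift S).powerset, F T = ∑ T ∈ S.powerset, F (shift T) := by
  rw [powerset_shift, sum_map]
  rfl

lemma sum_powerset_insertShift (S : Finset (Fin n)) (F : Finset (Fin (n + 1)) → ℝ) :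
    ∑ T ∈ (insertShift S).powerset, F T =
      ∑ T ∈ S.powerset, (F (shift T) + F (insertShift T)) := by
  rw [insertShift, sum_powerset_insert (zero_notMem_shift S), sum_powerset_shift,
    sum_powerset_shift, sum_add_distrib]
  rfl

lemma sum_finset_fin_succ (F : Finset (Fin (n + 1)) → ℝ) :
    ∑ T, F T = ∑ T : Finset (Fin n), (F (shift T) + F (insertShift T)) := by
  have huniv : (univ : Finset (Fin (n + 1))) = insertShift univ := by
    rw [Fin.univ_succ, cons_eq_insert]
    rfl
  rw [← powerset_univ, huniv, sum_powerset_insertShift, powerset_univ]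

lemma sum_shift_subset (S : Finset (Fin n)) (F : Finset (Fin (n + 1)) → ℝ) :
    ∑ T with shift S ⊆ T, F T = ∑ T with S ⊆ T, (F (shift T) + F (insertShift T)) := by
  simp only [sum_filter, sum_finset_fin_succ, shift_subset_shift, shift_subset_insertShift,
    ite_add_ite, add_zero]

lemma sum_insertShift_subset (S : Finset (Fin n)) (F : Finset (Fin (n + 1)) → ℝ) :
    ∑ T with insertShift S ⊆ T, F T = ∑ T with S ⊆ T, F (insertShift T) := by
  simp only [sum_filter, sum_finset_fin_succ, insertShift_subset_insertShift,
    not_insertShift_subset_shift, if_false, zero_add]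

end FinsetFinSucc

section Expectation

variable {p : ℝ}

lemma Ep_add (p : ℝ) (f g : (Fin n → Bool) → ℝ) :
    Ep p (fun x ↦ f x + g x) = Ep p f + Ep p g := by
  simp only [Ep, mul_add, sum_add_distrib]

lemma Ep_const_mul (p c : ℝ) (f : (Fin n → Bool) → ℝ) :
    Ep p (fun x ↦ c * f x) = c * Ep p f := by
  simp only [Ep, mul_sum, mul_left_comm]

lemma Ep_sum {ι : Type*} (p : ℝ) (s : Finset ι) (F : ι → (Fin n → Bool) → ℝ) :
    Ep p (fun x ↦ ∑ i ∈ s, F i x) = ∑ i ∈ s, Ep p (F i) := by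
  simp only [Ep, mul_sum]
  exact sum_comm

lemma Ep_fin_zero (p : ℝ) (f : (Fin 0 → Bool) → ℝ) : Ep p f = f default := by
  rw [Ep, Fintype.sum_unique, Fin.prod_univ_zero, one_mul]
  exact congrArg f (Subsingleton.elim _ _)

lemma prod_weight_nonneg (hp0 : 0 ≤ p) (hp1 : p ≤ 1) (x : Fin n → Bool) :
    0 ≤ ∏ i, if x i then p else 1 - p :=
  prod_nonneg fun i _ ↦ by split_ifs <;> linarith

lemma Ep_mono (hp0 : 0 ≤ p) (hp1 : p ≤ 1) {f g : (Fin n → Bool) → ℝ} (h : ∀ x, f x ≤ g x) :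
    Ep p f ≤ Ep p g :=
  sum_le_sum fun x _ ↦ mul_le_mul_of_nonneg_left (h x) (prod_weight_nonneg hp0 hp1 x)

lemma Ep_nonneg (hp0 : 0 ≤ p) (hp1 : p ≤ 1) {f : (Fin n → Bool) → ℝ} (hf : ∀ x, 0 ≤ f x) :
    0 ≤ Ep p f :=
  sum_nonneg fun x _ ↦ mul_nonneg (prod_weight_nonneg hp0 hp1 x) (hf x)

lemma Ep_mul_pow_two_le (hp0 : 0 ≤ p) (hp1 : p ≤ 1) {f : (Fin n → Bool) → ℝ} (hf : ∀ x, 0 ≤ f x)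
    (g : (Fin n → Bool) → ℝ) :
    Ep p (fun x ↦ f x * g x) ^ 2 ≤ Ep p f * Ep p (fun x ↦ f x * g x ^ 2) := by
  have hw := prod_weight_nonneg (n := n) hp0 hp1
  exact sum_sq_le_sum_mul_sum_of_sq_le_mul _ (fun x _ ↦ mul_nonneg (hw x) (hf x))
    (fun x _ ↦ mul_nonneg (hw x) (mul_nonneg (hf x) (sq_nonneg _))) (fun x _ ↦ le_of_eq (by ring))

lemma Ep_mul_pow_four_le (hp0 : 0 ≤ p) (hp1 : p ≤ 1) {f : (Fin n → Bool) → ℝ} (hf : ∀ x, 0 ≤ f x)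
    (g : (Fin n → Bool) → ℝ) :
    Ep p (fun x ↦ f x * g x) ^ 4 ≤ Ep p f ^ 3 * Ep p (fun x ↦ f x * g x ^ 4) := by
  have : 0 ≤ Ep p f := Ep_nonneg hp0 hp1 hf
  calc Ep p (fun x ↦ f x * g x) ^ 4
      = (Ep p (fun x ↦ f x * g x) ^ 2) ^ 2 := by ring
    _ ≤ (Ep p f * Ep p (fun x ↦ f x * g x ^ 2)) ^ 2 := by
      gcongr
      exact Ep_mul_pow_two_le hp0 hp1 hf g
    _ = Ep p f ^ 2 * Ep p (fun x ↦ f x * g x ^ 2) ^ 2 := by ring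
    _ ≤ Ep p f ^ 2 * (Ep p f * Ep p (fun x ↦ f x * (g x ^ 2) ^ 2)) := by
      gcongr
      exact Ep_mul_pow_two_le hp0 hp1 hf fun x ↦ g x ^ 2
    _ = Ep p f ^ 3 * Ep p (fun x ↦ f x * g x ^ 4) := by
      simp only [← pow_mul]
      ring

end Expectation

section FirstCoordinate

variable {p : ℝ}

/-- The average of `f` over its first coordinate, as a function of the other coordinates. -/
noncomputable def headAvg (p : ℝ) (f : (Fin (n + 1) → Bool) → ℝ) (x : Fin n → Bool) : ℝ :=
  p * f (Fin.cons true x) + (1 - p) * f (Fin.cons false x)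

/-- The derivative `D_{0} f` with respect to the first coordinate, as a function of the other
coordinates; with this normalisation `f = headAvg p f + χ_{0} * headDeriv p f`. -/
noncomputable def headDeriv (p : ℝ) (f : (Fin (n + 1) → Bool) → ℝ) (x : Fin n → Bool) : ℝ :=
  √(p * (1 - p)) * (f (Fin.cons true x) - f (Fin.cons false x))

lemma Ep_succ (p : ℝ) (f : (Fin (n + 1) → Bool) → ℝ) : Ep p f = Ep p (headAvg p f) := by
  unfold Ep headAvg
  rw [← (Fin.consEquiv fun _ ↦ Bool).sum_comp, Fintype.sum_prod_type, Fintype.sum_bool,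
    ← sum_add_distrib]
  refine sum_congr rfl fun x _ ↦ ?_
  simp only [Fin.consEquiv, Equiv.coe_fn_mk, Fin.prod_univ_succ, Fin.cons_zero, Fin.cons_succ,
    if_true, Bool.false_eq_true, if_false]
  ring

lemma chi_empty (p : ℝ) (x : Fin n → Bool) : chi p ∅ x = 1 :=
  prod_empty

lemma chi_shift_cons (p : ℝ) (T : Finset (Fin n)) (b : Bool) (x : Fin n → Bool) :
    chi p (shift T) (Fin.cons b x) = chi p T x := by
  simp [chi, shift]

lemma chi_insertShift_cons (p : ℝ) (T : Finset (Fin n)) (b : Bool) (x : Fin n → Bool) :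
    chi p (insertShift T) (Fin.cons b x) =
      ((if b then 1 else 0) - p) / √(p * (1 - p)) * chi p T x := by
  rw [← chi_shift_cons p T b x, chi, insertShift, prod_insert (zero_notMem_shift T)]
  rfl

lemma coeff_shift (p : ℝ) (f : (Fin (n + 1) → Bool) → ℝ) (T : Finset (Fin n)) :
    coeff p f (shift T) = coeff p (headAvg p f) T := by
  unfold coeff
  rw [Ep_succ]
  congr 1
  ext x
  simp only [headAvg, chi_shift_cons]
  ring

lemma coeff_insertShift (p : ℝ) (f : (Fin (n + 1) → Bool) → ℝ) (T : Finset (Fin n)) :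
    coeff p f (insertShift T) = coeff p (headDeriv p f) T := by
  unfold coeff
  rw [Ep_succ]
  congr 1
  ext x
  simp only [headAvg, headDeriv, chi_insertShift_cons, if_true, Bool.false_eq_true, if_false]
  nth_rw 3 [← Real.div_sqrt]
  ring

lemma coeff_fin_zero (p : ℝ) (f : (Fin 0 → Bool) → ℝ) (S : Finset (Fin 0)) :
    coeff p f S = f default := by
  rw [coeff, Ep_fin_zero, Subsingleton.elim S ∅, chi_empty, mul_one]

end FirstCoordinate

section Fourier

variable {p : ℝ}

/-- The function `Σ_S c(S) χ_S` with prescribed Fourier coefficients. -/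
noncomputable def ofCoeff (p : ℝ) (c : Finset (Fin n) → ℝ) (x : Fin n → Bool) : ℝ :=
  ∑ S, c S * chi p S x

lemma ofCoeff_fin_zero (p : ℝ) (c : Finset (Fin 0) → ℝ) (x : Fin 0 → Bool) :
    ofCoeff p c x = c ∅ := by
  rw [ofCoeff, Fintype.sum_unique, Subsingleton.elim default ∅, chi_empty, mul_one]

lemma ofCoeff_cons (p : ℝ) (c : Finset (Fin (n + 1)) → ℝ) (b : Bool) (x : Fin n → Bool) :
    ofCoeff p c (Fin.cons b x) = ofCoeff p (fun T ↦ c (shift T)) x +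
      ((if b then 1 else 0) - p) / √(p * (1 - p)) * ofCoeff p (fun T ↦ c (insertShift T)) x := by
  simp only [ofCoeff, sum_finset_fin_succ, sum_add_distrib, mul_sum, chi_shift_cons,
    chi_insertShift_cons, mul_left_comm]

lemma headAvg_ofCoeff (p : ℝ) (c : Finset (Fin (n + 1)) → ℝ) :
    headAvg p (ofCoeff p c) = ofCoeff p fun T ↦ c (shift T) := by
  ext x
  simp only [headAvg, ofCoeff_cons, if_true, Bool.false_eq_true, if_false]
  ring

lemma sqrt_mul_one_sub_ne_zero (hp0 : 0 < p) (hp1 : p < 1) : √(p * (1 - p)) ≠ 0 :=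
  (Real.sqrt_pos.2 (mul_pos hp0 (sub_pos.2 hp1))).ne'

lemma headDeriv_ofCoeff (hp0 : 0 < p) (hp1 : p < 1) (c : Finset (Fin (n + 1)) → ℝ) :
    headDeriv p (ofCoeff p c) = ofCoeff p fun T ↦ c (insertShift T) := by
  have hσ := sqrt_mul_one_sub_ne_zero hp0 hp1
  ext x
  simp only [headDeriv, ofCoeff_cons, if_true, Bool.false_eq_true, if_false]
  field_simp
  ring

lemma coeff_ofCoeff (hp0 : 0 < p) (hp1 : p < 1) {n : ℕ} (c : Finset (Fin n) → ℝ) :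
    coeff p (ofCoeff p c) = c := by
  induction n with
  | zero =>
    ext S
    rw [coeff_fin_zero, ofCoeff_fin_zero, Subsingleton.elim S ∅]
  | succ n ih =>
    ext S
    obtain ⟨T, rfl | rfl⟩ := exists_eq_shift_or_eq_insertShift S
    · rw [coeff_shift, headAvg_ofCoeff, ih]
    · rw [coeff_insertShift, headDeriv_ofCoeff hp0 hp1, ih]

lemma ofCoeff_coeff (hp0 : 0 < p) (hp1 : p < 1) {n : ℕ} (f : (Fin n → Bool) → ℝ) :
    ofCoeff p (coeff p f) = f := by
  induction n with
  | zero =>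
    ext x
    rw [ofCoeff_fin_zero, coeff_fin_zero, Subsingleton.elim x default]
  | succ n ih =>
    have hσ := sqrt_mul_one_sub_ne_zero hp0 hp1
    ext x
    induction x using Fin.consCases with
    | _ b x =>
      simp only [ofCoeff_cons, coeff_shift, coeff_insertShift, ih]
      cases b <;> simp only [headAvg, headDeriv, if_true, Bool.false_eq_true, if_false] <;>
        field_simp <;> ring

lemma Ep_mul_eq_sum_coeff (hp0 : 0 < p) (hp1 : p < 1) (f g : (Fin n → Bool) → ℝ) :
    Ep p (fun x ↦ f x * g x) = ∑ S, coeff p f S * coeff p g S := by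
  nth_rw 1 [← ofCoeff_coeff hp0 hp1 g]
  simp only [ofCoeff, mul_sum, Ep_sum, mul_left_comm (f _), Ep_const_mul]
  exact sum_congr rfl fun S _ ↦ mul_comm _ _

lemma Ep_sq_eq_sum_coeff_sq (hp0 : 0 < p) (hp1 : p < 1) (f : (Fin n → Bool) → ℝ) :
    Ep p (fun x ↦ f x ^ 2) = ∑ S, coeff p f S ^ 2 := by
  simp only [sq, Ep_mul_eq_sum_coeff hp0 hp1]

lemma coeff_noise (hp0 : 0 < p) (hp1 : p < 1) (ρ : ℝ) (f : (Fin n → Bool) → ℝ)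
    (S : Finset (Fin n)) : coeff p (noise p ρ f) S = ρ ^ S.card * coeff p f S :=
  congrFun (coeff_ofCoeff hp0 hp1 fun S ↦ ρ ^ S.card * coeff p f S) S

lemma noise_noise_of_mul_eq_one (hp0 : 0 < p) (hp1 : p < 1) {ρ ρ' : ℝ} (hρ : ρ * ρ' = 1)
    (f : (Fin n → Bool) → ℝ) : noise p ρ (noise p ρ' f) = f := by
  ext x
  rw [← congrFun (ofCoeff_coeff hp0 hp1 f) x]
  simp only [noise.eq_1 p ρ, coeff_noise hp0 hp1, ← mul_assoc, ← mul_pow, hρ, one_pow, one_mul]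
  rfl

lemma coeff_trunc (hp0 : 0 < p) (hp1 : p < 1) (r : ℕ) (f : (Fin n → Bool) → ℝ)
    (S : Finset (Fin n)) :
    coeff p (trunc p r f) S = if S.card ≤ r then coeff p f S else 0 := by
  have htrunc : trunc p r f = ofCoeff p fun S ↦ if S.card ≤ r then coeff p f S else 0 := by
    ext x
    simp only [trunc, ofCoeff, sum_filter, ite_mul, zero_mul]
  rw [htrunc, coeff_ofCoeff hp0 hp1]

lemma Ep_mul_trunc (hp0 : 0 < p) (hp1 : p < 1) (r : ℕ) (f : (Fin n → Bool) → ℝ) :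
    Ep p (fun x ↦ f x * trunc p r f x) = Ep p (fun x ↦ trunc p r f x ^ 2) := by
  rw [Ep_mul_eq_sum_coeff hp0 hp1, Ep_sq_eq_sum_coeff_sq hp0 hp1]
  refine sum_congr rfl fun S _ ↦ ?_
  rw [coeff_trunc hp0 hp1]
  split_ifs <;> ring

lemma stab_noise (hp0 : 0 < p) (hp1 : p < 1) (ρ ρ' : ℝ) (f : (Fin n → Bool) → ℝ) :
    stab p ρ (noise p ρ' f) = stab p (ρ * ρ' ^ 2) f := by
  refine sum_congr rfl fun S _ ↦ ?_
  rw [coeff_noise hp0 hp1]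
  ring

/-- The degree of the Fourier expansion of `f` is at most `r`. -/
def HasDegreeLE (p : ℝ) (r : ℕ) (f : (Fin n → Bool) → ℝ) : Prop :=
  ∀ S : Finset (Fin n), r < S.card → coeff p f S = 0

lemma hasDegreeLE_trunc (hp0 : 0 < p) (hp1 : p < 1) (r : ℕ) (f : (Fin n → Bool) → ℝ) :
    HasDegreeLE p r (trunc p r f) := fun S hS ↦ by
  rw [coeff_trunc hp0 hp1, if_neg hS.not_ge]

lemma HasDegreeLE.pow_card_mul_sq_coeff_le {r : ℕ} {f : (Fin n → Bool) → ℝ}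
    (hf : HasDegreeLE p r f) {a : ℝ} (ha : 1 ≤ a) (S : Finset (Fin n)) :
    a ^ S.card * coeff p f S ^ 2 ≤ a ^ r * coeff p f S ^ 2 := by
  obtain hS | hS := le_or_gt S.card r
  · gcongr
  · simp [hf S hS]

lemma HasDegreeLE.stab_le (hp0 : 0 < p) (hp1 : p < 1) {r : ℕ} {f : (Fin n → Bool) → ℝ}
    (hf : HasDegreeLE p r f) {a : ℝ} (ha : 1 ≤ a) :
    stab p a f ≤ a ^ r * Ep p (fun x ↦ f x ^ 2) := by
  rw [Ep_sq_eq_sum_coeff_sq hp0 hp1, mul_sum]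
  exact sum_le_sum fun S _ ↦ hf.pow_card_mul_sq_coeff_le ha S

end Fourier

section GeneralisedInfluence

variable {p : ℝ}

lemma genInf_nonneg (hp0 : 0 ≤ p) (hp1 : p ≤ 1) (S : Finset (Fin n)) (f : (Fin n → Bool) → ℝ) :
    0 ≤ genInf p S f :=
  div_nonneg (sum_nonneg fun _ _ ↦ sq_nonneg _)
    (pow_nonneg (mul_nonneg hp0 (sub_nonneg.2 hp1)) _)

lemma genInf_fin_zero (p : ℝ) (S : Finset (Fin 0)) (f : (Fin 0 → Bool) → ℝ) :
    genInf p S f = f default ^ 2 := by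
  simp [genInf, Subsingleton.elim S ∅, coeff_fin_zero]

lemma genInf_shift (p : ℝ) (S : Finset (Fin n)) (f : (Fin (n + 1) → Bool) → ℝ) :
    genInf p (shift S) f = genInf p S (headAvg p f) + genInf p S (headDeriv p f) := by
  simp only [genInf, sum_shift_subset, coeff_shift, coeff_insertShift, sum_add_distrib,
    card_shift, add_div]

lemma genInf_insertShift (p : ℝ) (S : Finset (Fin n)) (f : (Fin (n + 1) → Bool) → ℝ) :
    genInf p (insertShift S) f = genInf p S (headDeriv p f) / (p * (1 - p)) := by
  simp only [genInf, sum_insertShift_subset, coeff_insertShift, card_insertShift, pow_succ,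
    div_div]

lemma genInf_trunc_le (hp0 : 0 < p) (hp1 : p < 1) (r : ℕ) (S : Finset (Fin n))
    (f : (Fin n → Bool) → ℝ) : genInf p S (trunc p r f) ≤ genInf p S f := by
  refine div_le_div_of_nonneg_right (sum_le_sum fun T _ ↦ ?_) ?_
  · rw [coeff_trunc hp0 hp1]
    split_ifs
    · rfl
    · simpa only [zero_pow two_ne_zero] using sq_nonneg (coeff p f T)
  · exact pow_nonneg (mul_nonneg hp0.le (sub_nonneg.2 hp1.le)) _

lemma HasDegreeLE.genInf_noise_le (hp0 : 0 < p) (hp1 : p < 1) {r : ℕ} {f : (Fin n → Bool) → ℝ}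
    (hf : HasDegreeLE p r f) {ρ : ℝ} (hρ : 1 ≤ ρ ^ 2) (S : Finset (Fin n)) :
    genInf p S (noise p ρ f) ≤ (ρ ^ 2) ^ r * genInf p S f := by
  have : 0 < p * (1 - p) := mul_pos hp0 (sub_pos.2 hp1)
  rw [genInf, genInf, ← mul_div_assoc, mul_sum]
  gcongr with T
  rw [coeff_noise hp0 hp1, mul_pow, pow_right_comm]
  exact hf.pow_card_mul_sq_coeff_le hρ T

lemma HasDegreeLE.genInf_eq_zero {r : ℕ} {f : (Fin n → Bool) → ℝ} (hf : HasDegreeLE p r f)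
    {S : Finset (Fin n)} (hS : r < S.card) : genInf p S f = 0 := by
  have hsum : ∑ T with S ⊆ T, coeff p f T ^ 2 = 0 := sum_eq_zero fun T hT ↦ by
    rw [hf T (hS.trans_le (card_le_card (mem_filter.1 hT).2)), sq, zero_mul]
  rw [genInf, hsum, zero_div]

lemma sum_pow_card_mul_genInf (hp0 : 0 < p) (hp1 : p < 1) (t : ℝ) (f : (Fin n → Bool) → ℝ) :
    ∑ S, (t * (p * (1 - p))) ^ S.card * genInf p S f = stab p (t + 1) f := by
  have hq : p * (1 - p) ≠ 0 := (mul_pos hp0 (sub_pos.2 hp1)).ne'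
  calc ∑ S, (t * (p * (1 - p))) ^ S.card * genInf p S f
      = ∑ S : Finset (Fin n), ∑ T with S ⊆ T, t ^ S.card * coeff p f T ^ 2 := by
        refine sum_congr rfl fun S _ ↦ ?_
        rw [genInf, ← mul_sum, mul_pow, mul_assoc, mul_div_cancel₀ _ (pow_ne_zero _ hq)]
    _ = ∑ T, (∑ S ∈ T.powerset, t ^ S.card) * coeff p f T ^ 2 := by
        simp only [sum_filter]
        rw [sum_comm]
        simp only [← sum_filter, filter_subset_univ, sum_mul]
    _ = stab p (t + 1) f := by
        simp only [stab, ← sum_pow_mul_eq_add_pow, one_pow, mul_one]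

end GeneralisedInfluence

section Hypercontractivity

variable {p : ℝ}

lemma noise_cons (p ρ : ℝ) (f : (Fin (n + 1) → Bool) → ℝ) (b : Bool) (x : Fin n → Bool) :
    noise p ρ f (Fin.cons b x) = noise p ρ (headAvg p f) x +
      ((if b then 1 else 0) - p) / √(p * (1 - p)) * (ρ * noise p ρ (headDeriv p f) x) := by
  refine (ofCoeff_cons p (fun S ↦ ρ ^ S.card * coeff p f S) b x).trans ?_
  simp only [ofCoeff, noise, coeff_shift, coeff_insertShift, card_shift, card_insertShift,
    mul_sum, pow_succ', mul_assoc]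

lemma noise_fin_zero (p ρ : ℝ) (f : (Fin 0 → Bool) → ℝ) (x : Fin 0 → Bool) :
    noise p ρ f x = f default := by
  refine (ofCoeff_fin_zero p (fun S ↦ ρ ^ S.card * coeff p f S) x).trans ?_
  rw [card_empty, pow_zero, one_mul, coeff_fin_zero]

/- The cross terms of the expansion are absorbed by completing squares. The constant 4 on the right
is what forces the noise rate 1/2 in `Ep_noise_sq_mul_noise_sq_le`. -/
lemma two_point_sq_mul_sq_le (hp0 : 0 ≤ p) (hp1 : p ≤ 1) (a b c d : ℝ) :
    p * ((a + (1 - p) * b) ^ 2 * (c + (1 - p) * d) ^ 2) +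
        (1 - p) * ((a - p * b) ^ 2 * (c - p * d) ^ 2) ≤
      a ^ 2 * c ^ 2 + 4 * (p * (1 - p)) * (a ^ 2 * d ^ 2) +
        4 * (p * (1 - p)) * (b ^ 2 * c ^ 2) + 3 * (p * (1 - p)) * (b ^ 2 * d ^ 2) := by
  have : 0 ≤ p * (1 - p) := mul_nonneg hp0 (sub_nonneg.2 hp1)
  have hgap : 0 ≤ p * (1 - p) * (2 * (a * d - b * c) ^ 2 + (a * d - (1 - 2 * p) * (b * d)) ^ 2 +
    (b * c - (1 - 2 * p) * (b * d)) ^ 2 + 11 * (p * (1 - p)) * (b * d) ^ 2) := by positivity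
  linarith

lemma headAvg_noise_sq_mul_noise_sq_le (hp0 : 0 < p) (hp1 : p < 1)
    (f g : (Fin (n + 1) → Bool) → ℝ) (x : Fin n → Bool) :
    headAvg p (fun y ↦ noise p (1 / 2) f y ^ 2 * noise p (1 / 2) g y ^ 2) x ≤
      noise p (1 / 2) (headAvg p f) x ^ 2 * noise p (1 / 2) (headAvg p g) x ^ 2 +
      noise p (1 / 2) (headAvg p f) x ^ 2 * noise p (1 / 2) (headDeriv p g) x ^ 2 +
      noise p (1 / 2) (headDeriv p f) x ^ 2 * noise p (1 / 2) (headAvg p g) x ^ 2 +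
      3 / 16 / (p * (1 - p)) *
        (noise p (1 / 2) (headDeriv p f) x ^ 2 * noise p (1 / 2) (headDeriv p g) x ^ 2) := by
  have hσ := sqrt_mul_one_sub_ne_zero hp0 hp1
  have hσq : √(p * (1 - p)) ^ 2 = p * (1 - p) :=
    Real.sq_sqrt (mul_nonneg hp0.le (sub_nonneg.2 hp1.le))
  simp only [headAvg, noise_cons, if_true, Bool.false_eq_true, if_false]
  set σ := √(p * (1 - p))
  set a := noise p (1 / 2) (headAvg p f) x
  set c := noise p (1 / 2) (headAvg p g) x
  set b := noise p (1 / 2) (headDeriv p f) x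
  set d := noise p (1 / 2) (headDeriv p g) x
  refine Eq.trans_le ?_ ((two_point_sq_mul_sq_le hp0.le hp1.le
    a (b / (2 * σ)) c (d / (2 * σ))).trans_eq ?_)
  · ring
  · rw [← hσq]
    field_simp
    ring

/-- The bilinear form `Σ_S κ^{|S|} I_S(f) I_S(g)` of generalised influences. -/
noncomputable def influencePairing (p κ : ℝ) (f g : (Fin n → Bool) → ℝ) : ℝ :=
  ∑ S, κ ^ S.card * (genInf p S f * genInf p S g)

lemma influencePairing_fin_zero (p κ : ℝ) (f g : (Fin 0 → Bool) → ℝ) :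
    influencePairing p κ f g = f default ^ 2 * g default ^ 2 := by
  simp only [influencePairing, genInf_fin_zero, Fintype.sum_unique,
    Subsingleton.elim (default : Finset (Fin 0)) ∅, card_empty, pow_zero, one_mul]

lemma influencePairing_succ (p κ : ℝ) (f g : (Fin (n + 1) → Bool) → ℝ) :
    influencePairing p κ f g =
      influencePairing p κ (headAvg p f) (headAvg p g) +
      influencePairing p κ (headAvg p f) (headDeriv p g) +
      influencePairing p κ (headDeriv p f) (headAvg p g) +
      (1 + κ / (p * (1 - p)) ^ 2) * influencePairing p κ (headDeriv p f) (headDeriv p g) := by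
  simp only [influencePairing, sum_finset_fin_succ, genInf_shift, genInf_insertShift, card_shift,
    card_insertShift, mul_sum, ← sum_add_distrib]
  refine sum_congr rfl fun S _ ↦ ?_
  rw [pow_succ, div_mul_div_comm, ← sq]
  ring

lemma Ep_noise_sq_mul_noise_sq_le (hp0 : 0 < p) (hp1 : p < 1) {n : ℕ}
    (f g : (Fin n → Bool) → ℝ) :
    Ep p (fun x ↦ noise p (1 / 2) f x ^ 2 * noise p (1 / 2) g x ^ 2) ≤
      influencePairing p (3 / 16 * (p * (1 - p))) f g := by
  have : 0 < p * (1 - p) := mul_pos hp0 (sub_pos.2 hp1)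
  induction n with
  | zero => simp only [Ep_fin_zero, noise_fin_zero, influencePairing_fin_zero, le_refl]
  | succ n ih =>
    rw [Ep_succ, influencePairing_succ]
    refine (Ep_mono hp0.le hp1.le (headAvg_noise_sq_mul_noise_sq_le hp0 hp1 f g)).trans ?_
    simp only [Ep_add, Ep_const_mul]
    gcongr ?_ + ?_ + ?_ + ?_
    · exact ih _ _
    · exact ih _ _
    · exact ih _ _
    · refine mul_le_mul ?_ (ih _ _)
        (Ep_nonneg hp0.le hp1.le fun x ↦ mul_nonneg (sq_nonneg _) (sq_nonneg _)) (by positivity)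
      have hκ : 3 / 16 * (p * (1 - p)) / (p * (1 - p)) ^ 2 = 3 / 16 / (p * (1 - p)) := by
        field_simp
      rw [hκ]
      exact le_add_of_nonneg_left zero_le_one

lemma influencePairing_self_le (hp0 : 0 < p) (hp1 : p < 1) {a κ K : ℝ} (hκ : 0 ≤ κ)
    {f : (Fin n → Bool) → ℝ} (hf : ∀ S, genInf p S f ≤ a ^ S.card * K) :
    influencePairing p (κ * (p * (1 - p))) f f ≤ K * stab p (κ * a + 1) f := by
  have : 0 < p * (1 - p) := mul_pos hp0 (sub_pos.2 hp1)
  have hnonneg (S : Finset (Fin n)) : 0 ≤ genInf p S f := genInf_nonneg hp0.le hp1.le S f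
  calc influencePairing p (κ * (p * (1 - p))) f f
      ≤ ∑ S, (κ * (p * (1 - p))) ^ S.card * (a ^ S.card * K * genInf p S f) := by
        unfold influencePairing
        gcongr with S
        · exact hnonneg S
        · exact hf S
    _ = K * ∑ S, (κ * a * (p * (1 - p))) ^ S.card * genInf p S f := by
        rw [mul_sum]
        refine sum_congr rfl fun S _ ↦ ?_
        rw [mul_right_comm κ a, mul_pow _ a]
        ring
    _ = K * stab p (κ * a + 1) f := by rw [sum_pow_card_mul_genInf hp0 hp1]

lemma HasDegreeLE.Ep_pow_four_le (hp0 : 0 < p) (hp1 : p < 1) {r : ℕ} {g : (Fin n → Bool) → ℝ}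
    (hg : HasDegreeLE p r g) {M : ℝ}
    (hM : ∀ S : Finset (Fin n), S.card ≤ r → genInf p S g ≤ (16 / 3) ^ S.card * M) :
    Ep p (fun x ↦ g x ^ 4) ≤ 32 ^ r * M * Ep p (fun x ↦ g x ^ 2) := by
  have hM0 : 0 ≤ M := by
    simpa using (genInf_nonneg hp0.le hp1.le ∅ g).trans (hM ∅ (by simp))
  have hinf (S : Finset (Fin n)) : genInf p S g ≤ (16 / 3) ^ S.card * M := by
    obtain hS | hS := le_or_gt S.card r
    · exact hM S hS
    · rw [hg.genInf_eq_zero hS]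
      positivity
  set h := noise p 2 g with hh
  have hinf_noise (S : Finset (Fin n)) : genInf p S h ≤ (16 / 3) ^ S.card * (4 ^ r * M) :=
    calc genInf p S h
        ≤ (2 ^ 2) ^ r * genInf p S g := hg.genInf_noise_le hp0 hp1 (by norm_num) S
      _ ≤ (2 ^ 2) ^ r * ((16 / 3) ^ S.card * M) := by
        gcongr
        exact hinf S
      _ = (16 / 3) ^ S.card * (4 ^ r * M) := by
        norm_num
        ring
  calc Ep p (fun x ↦ g x ^ 4)
      = Ep p (fun x ↦ noise p (1 / 2) h x ^ 2 * noise p (1 / 2) h x ^ 2) := by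
        rw [hh, noise_noise_of_mul_eq_one hp0 hp1 (by norm_num)]
        simp only [← pow_add]
    _ ≤ influencePairing p (3 / 16 * (p * (1 - p))) h h := Ep_noise_sq_mul_noise_sq_le hp0 hp1 h h
    _ ≤ 4 ^ r * M * stab p (3 / 16 * (16 / 3) + 1) h :=
        influencePairing_self_le hp0 hp1 (by norm_num) hinf_noise
    _ = 4 ^ r * M * stab p 8 g := by
        rw [hh, stab_noise hp0 hp1]
        norm_num
    _ ≤ 4 ^ r * M * (8 ^ r * Ep p (fun x ↦ g x ^ 2)) := by
        gcongr
        exact hg.stab_le hp0 hp1 (by norm_num)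
    _ = 32 ^ r * M * Ep p (fun x ↦ g x ^ 2) := by
        rw [show (32 : ℝ) = 4 * 8 by norm_num, mul_pow]
        ring

end Hypercontractivity

section Globalness

variable {p : ℝ}

lemma restrict1_shift_cons (J : Finset (Fin n)) (f : (Fin (n + 1) → Bool) → ℝ) (b : Bool)
    (x : Fin n → Bool) :
    restrict1 (shift J) f (Fin.cons b x) = restrict1 J (fun y ↦ f (Fin.cons b y)) x := by
  unfold restrict1
  congr 1
  ext i
  cases i using Fin.cases <;> simp [zero_notMem_shift, succ_mem_shift]

lemma restrict1_insertShift_cons (J : Finset (Fin n)) (f : (Fin (n + 1) → Bool) → ℝ) (b : Bool)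
    (x : Fin n → Bool) :
    restrict1 (insertShift J) f (Fin.cons b x) = restrict1 J (fun y ↦ f (Fin.cons true y)) x := by
  unfold restrict1
  congr 1
  ext i
  cases i using Fin.cases <;> simp [zero_mem_insertShift, succ_mem_insertShift]

lemma Ep_sq_restrict1_shift (hp0 : 0 ≤ p) (hp1 : p ≤ 1) (J : Finset (Fin n))
    (f : (Fin (n + 1) → Bool) → ℝ) :
    Ep p (fun x ↦ restrict1 (shift J) f x ^ 2) =
      Ep p (fun x ↦ restrict1 J (headAvg p f) x ^ 2) +
        Ep p (fun x ↦ restrict1 J (headDeriv p f) x ^ 2) := by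
  have hσq : √(p * (1 - p)) ^ 2 = p * (1 - p) :=
    Real.sq_sqrt (mul_nonneg hp0 (sub_nonneg.2 hp1))
  rw [← Ep_add, Ep_succ]
  congr 1
  ext x
  simp only [headAvg.eq_1 p fun _ ↦ _ ^ 2, restrict1_shift_cons]
  simp only [restrict1, headAvg, headDeriv, mul_pow, hσq]
  ring

/- The constant `8 / 3` is optimal at `p = 1 / 2`, where the inequality is an equality for
`v = -3 * u`. -/
lemma sub_sq_le_average_sq_add_sq (hp0 : 0 ≤ p) (hp1 : p ≤ 1 / 2) (u v : ℝ) :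
    (u - v) ^ 2 ≤ 8 / 3 * (p * u ^ 2 + (1 - p) * v ^ 2 + u ^ 2) := by
  have : 0 ≤ 1 - 2 * p := by linarith
  have hgap : 0 ≤ 2 * p / 3 * (3 * u + v) ^ 2 +
    (1 - 2 * p) * ((u + v) ^ 2 + 2 / 3 * (u ^ 2 + v ^ 2)) := by positivity
  linarith

lemma Ep_sq_restrict1_headDeriv_le (hp0 : 0 ≤ p) (hp1 : p ≤ 1 / 2) (J : Finset (Fin n))
    (f : (Fin (n + 1) → Bool) → ℝ) :
    Ep p (fun x ↦ restrict1 J (headDeriv p f) x ^ 2) ≤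
      p * (1 - p) * (8 / 3 * (Ep p (fun x ↦ restrict1 (shift J) f x ^ 2) +
        Ep p (fun x ↦ restrict1 (insertShift J) f x ^ 2))) := by
  have hq : 0 ≤ p * (1 - p) := mul_nonneg hp0 (by linarith)
  rw [Ep_succ p fun x ↦ restrict1 (shift J) f x ^ 2,
    Ep_succ p fun x ↦ restrict1 (insertShift J) f x ^ 2, ← Ep_add, ← Ep_const_mul, ← Ep_const_mul]
  refine Ep_mono hp0 (by linarith) fun x ↦ ?_
  simp only [headAvg, restrict1_shift_cons, restrict1_insertShift_cons]
  simp only [restrict1, headDeriv, mul_pow, Real.sq_sqrt hq]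
  gcongr
  refine (sub_sq_le_average_sq_add_sq hp0 hp1 _ _).trans_eq ?_
  ring

lemma genInf_le_sum_Ep_sq_restrict1 (hp0 : 0 < p) (hp1 : p ≤ 1 / 2) {n : ℕ} (S : Finset (Fin n))
    (f : (Fin n → Bool) → ℝ) :
    genInf p S f ≤ (8 / 3) ^ S.card * ∑ J ∈ S.powerset, Ep p (fun x ↦ restrict1 J f x ^ 2) := by
  have hq : 0 < p * (1 - p) := mul_pos hp0 (by linarith)
  induction n with
  | zero =>
    simp [Subsingleton.elim S ∅, genInf_fin_zero, Ep_fin_zero, restrict1, Pi.default_def]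
  | succ n ih =>
    obtain ⟨S, rfl | rfl⟩ := exists_eq_shift_or_eq_insertShift S
    · rw [genInf_shift, card_shift, sum_powerset_shift]
      simp only [Ep_sq_restrict1_shift hp0.le (hp1.trans (by norm_num)), sum_add_distrib, mul_add]
      exact add_le_add (ih S _) (ih S _)
    · rw [genInf_insertShift, card_insertShift, sum_powerset_insertShift, div_le_iff₀ hq]
      calc genInf p S (headDeriv p f)
          ≤ (8 / 3) ^ S.card *
              ∑ J ∈ S.powerset, Ep p (fun x ↦ restrict1 J (headDeriv p f) x ^ 2) := ih S _
        _ ≤ (8 / 3) ^ S.card * ∑ J ∈ S.powerset, p * (1 - p) *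
              (8 / 3 * (Ep p (fun x ↦ restrict1 (shift J) f x ^ 2) +
                Ep p (fun x ↦ restrict1 (insertShift J) f x ^ 2))) := by
            gcongr with J
            exact Ep_sq_restrict1_headDeriv_le hp0.le hp1 J f
        _ = _ := by
            rw [← mul_sum, ← mul_sum]
            ring

lemma IsGlobal.nonneg {r δ : ℝ} (hr : 0 ≤ r) {f : (Fin n → Bool) → ℝ}
    (hglob : IsGlobal p r δ f) : 0 ≤ δ := by
  have hempty : restrict1 ∅ f = f := by
    ext x
    simp [restrict1]
  have h := hglob ∅ (by simpa using hr)
  rw [hempty] at h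
  linarith

lemma IsGlobal.genInf_le {r δ : ℝ} (hp0 : 0 < p) (hp1 : p ≤ 1 / 2) {f : (Fin n → Bool) → ℝ}
    (hf : ∀ x, f x ∈ Set.Icc 0 1) (hglob : IsGlobal p r δ f) {S : Finset (Fin n)}
    (hS : (S.card : ℝ) ≤ r) : genInf p S f ≤ (16 / 3) ^ S.card * (Ep p f + δ) := by
  have hrestrict : ∀ J ∈ S.powerset, Ep p (fun x ↦ restrict1 J f x ^ 2) ≤ Ep p f + δ := by
    intro J hJ
    have hJr : (J.card : ℝ) ≤ r :=
      (Nat.cast_le.2 (card_le_card (mem_powerset.1 hJ))).trans hS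
    exact (Ep_mono hp0.le (by linarith) fun x ↦ sq_le (hf _).1 (hf _).2).trans (hglob J hJr)
  calc genInf p S f
      ≤ (8 / 3) ^ S.card * ∑ J ∈ S.powerset, Ep p (fun x ↦ restrict1 J f x ^ 2) :=
        genInf_le_sum_Ep_sq_restrict1 hp0 hp1 S f
    _ ≤ (8 / 3) ^ S.card * (S.powerset.card • (Ep p f + δ)) := by
        gcongr
        exact sum_le_card_nsmul _ _ _ hrestrict
    _ = (16 / 3) ^ S.card * (Ep p f + δ) := by
        rw [card_powerset, nsmul_eq_mul, Nat.cast_pow, ← mul_assoc, ← mul_pow]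
        norm_num

lemma IsGlobal.Ep_trunc_sq_pow_three_le {δ : ℝ} {r : ℕ} (hp0 : 0 < p) (hp1 : p ≤ 1 / 2)
    {f : (Fin n → Bool) → ℝ} (hf : ∀ x, f x ∈ Set.Icc 0 1) (hglob : IsGlobal p r δ f) :
    Ep p (fun x ↦ trunc p r f x ^ 2) ^ 3 ≤ 32 ^ r * (Ep p f + δ) * Ep p f ^ 3 := by
  have hp1' : p < 1 := by linarith
  set W := Ep p fun x ↦ trunc p r f x ^ 2 with hW
  have hμ : 0 ≤ Ep p f := Ep_nonneg hp0.le hp1'.le fun x ↦ (hf x).1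
  have hδ : 0 ≤ δ := hglob.nonneg r.cast_nonneg
  obtain hW0 | hW0 : 0 = W ∨ 0 < W := (Ep_nonneg hp0.le hp1'.le fun x ↦ sq_nonneg _).eq_or_lt
  · rw [← hW0, zero_pow three_ne_zero]
    positivity
  refine le_of_mul_le_mul_right ?_ hW0
  calc W ^ 3 * W = Ep p (fun x ↦ f x * trunc p r f x) ^ 4 := by
        rw [Ep_mul_trunc hp0 hp1', ← hW]
        ring
    _ ≤ Ep p f ^ 3 * Ep p (fun x ↦ f x * trunc p r f x ^ 4) :=
        Ep_mul_pow_four_le hp0.le hp1'.le (fun x ↦ (hf x).1) _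
    _ ≤ Ep p f ^ 3 * Ep p (fun x ↦ trunc p r f x ^ 4) := by
        gcongr
        exact Ep_mono hp0.le hp1'.le fun x ↦ mul_le_of_le_one_left (by positivity) (hf x).2
    _ ≤ Ep p f ^ 3 * (32 ^ r * (Ep p f + δ) * W) := by
        gcongr
        exact (hasDegreeLE_trunc hp0 hp1' r f).Ep_pow_four_le hp0 hp1' fun S hS ↦
          (genInf_trunc_le hp0 hp1' r S f).trans (hglob.genInf_le hp0 hp1 hf (Nat.cast_le.2 hS))
    _ = 32 ^ r * (Ep p f + δ) * Ep p f ^ 3 * W := by ring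

end Globalness

theorem statement9_general {n : ℕ} (p δ : ℝ) (r : ℕ) (hp : 0 < p) (hp' : p ≤ 1 / 2) (hr : 1 ≤ r)
    (f : (Fin n → Bool) → ℝ) (hf : ∀ x, f x ∈ Set.Icc 0 1) (hglob : IsGlobal p (r : ℝ) δ f)
    (hmeas : Ep p f ≤ δ) :
    Ep p (fun x ↦ trunc p r f x ^ 2) ≤ (10 : ℝ) ^ r * δ ^ ((1 : ℝ) / 3) * Ep p f := by
  have hμ : 0 ≤ Ep p f := Ep_nonneg hp.le (by linarith) fun x ↦ (hf x).1
  have hδ : 0 ≤ δ := hμ.trans hmeas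
  have hconst : (2 : ℝ) * 32 ^ r ≤ (10 ^ r) ^ 3 :=
    calc (2 : ℝ) * 32 ^ r ≤ 2 ^ r * 32 ^ r := by
          gcongr
          exact le_self_pow₀ one_le_two (by lia)
      _ = 64 ^ r := by
          rw [← mul_pow]
          norm_num
      _ ≤ (10 ^ 3) ^ r := by
          gcongr
          norm_num
      _ = (10 ^ r) ^ 3 := pow_right_comm ..
  refine le_of_pow_le_pow_left₀ three_ne_zero (by positivity) ?_
  calc Ep p (fun x ↦ trunc p r f x ^ 2) ^ 3
      ≤ 32 ^ r * (Ep p f + δ) * Ep p f ^ 3 := hglob.Ep_trunc_sq_pow_three_le hp hp' hf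
    _ ≤ 32 ^ r * (δ + δ) * Ep p f ^ 3 := by gcongr
    _ = 2 * 32 ^ r * δ * Ep p f ^ 3 := by ring
    _ ≤ (10 ^ r) ^ 3 * δ * Ep p f ^ 3 := by gcongr
    _ = (10 ^ r * δ ^ ((1 : ℝ) / 3) * Ep p f) ^ 3 := by
      rw [mul_pow, mul_pow, ← Real.rpow_mul_natCast hδ]
      norm_num

/-- low-degree concentration for sparse global Boolean functions. -/
theorem statement9 {n : ℕ} (p δ : ℝ) (r : ℕ) (hp : 0 < p) (hp' : p ≤ 1/2)
    (hr : 1 ≤ r) (hδ : 0 < δ)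
    (f : (Fin n → Bool) → ℝ) (hbool : ∀ x, f x = 0 ∨ f x = 1)
    (hglob : IsGlobal p (r : ℝ) δ f) (hmeas : Ep p f < δ) :
    Ep p (fun x => trunc p r f x ^ 2) ≤ (10 : ℝ) ^ r * δ ^ ((1 : ℝ)/3) * Ep p f := by
  have hf : ∀ x, f x ∈ Set.Icc 0 1 := fun x ↦ by rcases hbool x with h | h <;> simp [h]
  exact statement9_general p δ r hp hp' hr f hf hglob hmeas.le

end GlobalHC
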